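/- Let n ≥ 2, let f : ℂⁿ → ℂ be holomorphic, and let p ∈ ℂⁿ with f(p) = 0 and (∂f/∂z₁)(p) ≠ 0. Then there exist an open neighborhood V of p and a holomorphic map X : V → ℂⁿ with X nowhere vanishing on V, such that for every δ > 0 there is an open neighborhood V′ ⊆ V of p with the following property: for every q ∈ V′ with f(q) ≠ 0, every ε > 0, and every holomorphic Z : B(0,ε) → V with Z(0) = q, Z′(T) = X(Z(T)) and f(Z(T)) ≠ 0 for all T ∈ B(0,ε), the Gaussian curvature K(0) at T = 0 of the conformal metric h(T)|dT|², where h(T) = (1 + |f(Z(T))|²·u(|f(Z(T))|²)²)·|df(Z(T))(X(Z(T)))|² + ‖X(Z(T))‖², satisfies |K(0) − (−4)| < δ. (In other words, the leafwise Gaussian curvature along the foliation induced by X tends to −4 as the base point tends to p.) -/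

import Mathlib

open Complex Filter Topology Metric
open scoped ComplexOrder

/-- The function `u(t) = (t-1)/(t log t)` for `t ≠ 1`, extended by `u(1) = 1`. -/
noncomputable def u (t : ℝ) : ℝ := if t = 1 then 1 else (t - 1) / (t * Real.log t)

/-- Wirtinger derivative `∂g` of a complex-valued function on `ℂ` (real-differentiable sense). -/
noncomputable def wdz (g : ℂ → ℂ) (z : ℂ) : ℂ :=
  (fderiv ℝ g z 1 - Complex.I * fderiv ℝ g z Complex.I) / 2

/-- Wirtinger derivative `∂̄g` of a complex-valued function on `ℂ`. -/
noncomputable def wdzbar (g : ℂ → ℂ) (z : ℂ) : ℂ :=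
  (fderiv ℝ g z 1 + Complex.I * fderiv ℝ g z Complex.I) / 2

/-- `∂h` for a real-valued `h`. -/
noncomputable def wdzR (h : ℂ → ℝ) : ℂ → ℂ := wdz fun w => (h w : ℂ)

/-- `∂̄h` for a real-valued `h`. -/
noncomputable def wdzbarR (h : ℂ → ℝ) : ℂ → ℂ := wdzbar fun w => (h w : ℂ)

/-- `∂∂̄h` for a real-valued `h`. -/
noncomputable def wlapR (h : ℂ → ℝ) : ℂ → ℂ := wdz (wdzbarR h)

/-- The numerator `h·∂∂̄h − ∂h·∂̄h` of (−1/2 times) the Gaussian curvature of `h|dz|²`. -/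
noncomputable def curvNum (h : ℂ → ℝ) (z : ℂ) : ℂ :=
  (h z : ℂ) * wlapR h z - wdzR h z * wdzbarR h z

/-- The Gaussian curvature `K = −2(h·∂∂̄h − ∂h·∂̄h)/h³` of the conformal metric `h|dz|²`. -/
noncomputable def gaussCurv (h : ℂ → ℝ) (z : ℂ) : ℂ :=
  -2 * curvNum h z / (h z : ℂ) ^ 3

/-!
In the direction of `v = ∂/∂z₁` take the field `X = v / df(v)`. Along a leaf `Z` the function
`w = f ∘ Z` then satisfies `w' = 1`, so the leaf metric is
`1 + |w|² u(|w|²)² + ‖X‖² = P⁻¹ D`, where `P = |w|² log² |w|²` and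
`D = (1 - |w|²)² + P (1 + ‖X‖²)`. Now `P⁻¹` is the Poincaré metric of the punctured disc, of
constant curvature `-4`, and a product of metrics has curvature `K = -4 / D + P K_D`. As the base
point tends to `p` we have `w → 0`, hence `P → 0` and `D → 1`. The curvature `K_D` itself may blow
up, but only because of the logarithms in the second derivatives of `P`, and `P K_D → 0`.

The remaining input is that `z ↦ df_z(v)` is holomorphic. In several variables, with no power series
at hand, this follows from Schwarz's lemma: it makes `f`, and then `df`, locally Lipschitz, so the
difference quotients of `f` in the direction `v` converge locally uniformly.
-/

open Asymptotics
open scoped ComplexConjugate NNReal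

section Wirtinger

variable {f g : ℂ → ℂ} {h k : ℂ → ℝ} {z : ℂ}

theorem wdz_add (hf : DifferentiableAt ℝ f z) (hg : DifferentiableAt ℝ g z) :
    wdz (fun x => f x + g x) z = wdz f z + wdz g z := by
  simp only [wdz, fderiv_fun_add hf hg, add_apply]
  ring

theorem wdz_mul (hf : DifferentiableAt ℝ f z) (hg : DifferentiableAt ℝ g z) :
    wdz (fun x => f x * g x) z = f z * wdz g z + g z * wdz f z := by
  simp only [wdz, fderiv_fun_mul hf hg, add_apply, smul_apply, smul_eq_mul]
  ring

theorem wdz_conj (hf : DifferentiableAt ℝ f z) :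
    wdz (fun x => conj (f x)) z = conj (wdzbar f z) := by
  have hconj : fderiv ℝ (fun x => conj (f x)) z = (conjCLE : ℂ →L[ℝ] ℂ) ∘L fderiv ℝ f z :=
    (conjCLE.hasFDerivAt.comp z hf.hasFDerivAt).fderiv
  simp [wdz, wdzbar, hconj, sub_eq_add_neg, map_ofNat]

theorem wdz_eq_deriv (hf : DifferentiableAt ℂ f z) : wdz f z = deriv f z := by
  rw [wdz, hf.fderiv_restrictScalars ℝ]
  simp only [ContinuousLinearMap.coe_restrictScalars', fderiv_eq_smul_deriv, smul_eq_mul]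
  linear_combination (-deriv f z / 2) * I_mul_I

theorem wdzbar_eq_zero (hf : DifferentiableAt ℂ f z) : wdzbar f z = 0 := by
  rw [wdzbar, hf.fderiv_restrictScalars ℝ]
  simp only [ContinuousLinearMap.coe_restrictScalars', fderiv_eq_smul_deriv, smul_eq_mul]
  linear_combination (deriv f z / 2) * I_mul_I

theorem wdz_congr (hfg : f =ᶠ[𝓝 z] g) : wdz f z = wdz g z := by
  rw [wdz, wdz, hfg.fderiv_eq]

theorem wdzbar_congr (hfg : f =ᶠ[𝓝 z] g) : wdzbar f z = wdzbar g z := by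
  rw [wdzbar, wdzbar, hfg.fderiv_eq]

theorem differentiableAt_ofReal_comp (hh : DifferentiableAt ℝ h z) :
    DifferentiableAt ℝ (fun x => (h x : ℂ)) z :=
  ofRealCLM.differentiableAt.comp z hh

theorem conj_wdzR (hh : DifferentiableAt ℝ h z) : conj (wdzR h z) = wdzbarR h z := by
  rw [wdzbarR, ← conj_conj (wdzbar _ z), ← wdz_conj (differentiableAt_ofReal_comp hh)]
  simp only [conj_ofReal, wdzR]

theorem wdzR_comp {φ : ℝ → ℝ} {φ' : ℝ} (hφ : HasDerivAt φ φ' (h z))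
    (hh : DifferentiableAt ℝ h z) : wdzR (fun x => φ (h x)) z = φ' * wdzR h z := by
  have hfderiv {k : ℂ → ℝ} {k' : ℂ →L[ℝ] ℝ} (hk : HasFDerivAt k k' z) :
      fderiv ℝ (fun x => (k x : ℂ)) z = ofRealCLM ∘L k' :=
    (ofRealCLM.hasFDerivAt.comp z hk).fderiv
  simp only [wdzR, wdz, hfderiv hh.hasFDerivAt,
    hfderiv (k := fun x => φ (h x)) (hφ.comp_hasFDerivAt z hh.hasFDerivAt),
    ContinuousLinearMap.comp_apply, smul_apply, ofRealCLM_apply, smul_eq_mul,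
    ofReal_mul]
  ring

theorem wdzR_add (hh : DifferentiableAt ℝ h z) (hk : DifferentiableAt ℝ k z) :
    wdzR (fun x => h x + k x) z = wdzR h z + wdzR k z := by
  simpa only [wdzR, ofReal_add] using
    wdz_add (differentiableAt_ofReal_comp hh) (differentiableAt_ofReal_comp hk)

theorem wdzR_mul (hh : DifferentiableAt ℝ h z) (hk : DifferentiableAt ℝ k z) :
    wdzR (fun x => h x * k x) z = h z * wdzR k z + k z * wdzR h z := by
  simpa only [wdzR, ofReal_mul] using
    wdz_mul (differentiableAt_ofReal_comp hh) (differentiableAt_ofReal_comp hk)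

theorem wdzbarR_add (hh : DifferentiableAt ℝ h z) (hk : DifferentiableAt ℝ k z) :
    wdzbarR (fun x => h x + k x) z = wdzbarR h z + wdzbarR k z := by
  rw [← conj_wdzR (hh.fun_add hk), wdzR_add hh hk, map_add, conj_wdzR hh, conj_wdzR hk]

theorem wdzbarR_mul (hh : DifferentiableAt ℝ h z) (hk : DifferentiableAt ℝ k z) :
    wdzbarR (fun x => h x * k x) z = h z * wdzbarR k z + k z * wdzbarR h z := by
  rw [← conj_wdzR (hh.fun_mul hk), wdzR_mul hh hk, map_add, map_mul, map_mul, conj_ofReal,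
    conj_ofReal, conj_wdzR hh, conj_wdzR hk]

theorem differentiableAt_wdzbarR (hh : ContDiffAt ℝ 2 h z) :
    DifferentiableAt ℝ (wdzbarR h) z := by
  have hfderiv : DifferentiableAt ℝ (fderiv ℝ fun x => (h x : ℂ)) z :=
    ((ofRealCLM.contDiff.contDiffAt.comp z hh).fderiv_right (m := 1) (by norm_num))
      |>.differentiableAt one_ne_zero
  unfold wdzbarR wdzbar
  fun_prop

theorem eventually_differentiableAt (hh : ContDiffAt ℝ 2 h z) :
    ∀ᶠ x in 𝓝 z, DifferentiableAt ℝ h x :=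
  (hh.eventually (by decide)).mono fun _ hx => hx.differentiableAt two_ne_zero

theorem wlapR_add (hh : ContDiffAt ℝ 2 h z) (hk : ContDiffAt ℝ 2 k z) :
    wlapR (fun x => h x + k x) z = wlapR h z + wlapR k z := by
  have hbar : wdzbarR (fun x => h x + k x) =ᶠ[𝓝 z] fun x => wdzbarR h x + wdzbarR k x := by
    filter_upwards [eventually_differentiableAt hh, eventually_differentiableAt hk]
      with x hx kx using wdzbarR_add hx kx
  rw [wlapR, wdz_congr hbar, wdz_add (differentiableAt_wdzbarR hh) (differentiableAt_wdzbarR hk)]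
  rfl

theorem wlapR_mul (hh : ContDiffAt ℝ 2 h z) (hk : ContDiffAt ℝ 2 k z) :
    wlapR (fun x => h x * k x) z =
      h z * wlapR k z + wdzR h z * wdzbarR k z + (k z * wlapR h z + wdzR k z * wdzbarR h z) := by
  have hbar : wdzbarR (fun x => h x * k x) =ᶠ[𝓝 z]
      fun x => h x * wdzbarR k x + k x * wdzbarR h x := by
    filter_upwards [eventually_differentiableAt hh, eventually_differentiableAt hk]
      with x hx kx using wdzbarR_mul hx kx
  have h1 := differentiableAt_ofReal_comp (hh.differentiableAt two_ne_zero)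
  have k1 := differentiableAt_ofReal_comp (hk.differentiableAt two_ne_zero)
  have h2 := differentiableAt_wdzbarR hh
  have k2 := differentiableAt_wdzbarR hk
  rw [wlapR, wdz_congr hbar, wdz_add (h1.fun_mul k2) (k1.fun_mul h2), wdz_mul h1 k2, wdz_mul k1 h2]
  simp only [wlapR, wdzR]
  ring

theorem wdzR_const (c : ℝ) : wdzR (fun _ => c) = 0 := by
  ext z
  simp [wdzR, wdz]

theorem wlapR_const (c : ℝ) : wlapR (fun _ => c) = 0 := by
  have hbar : wdzbarR (fun _ => c) = fun _ => 0 := by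
    ext z
    simp [wdzbarR, wdzbar]
  ext z
  simp [wlapR, hbar, wdz]

end Wirtinger

section Curvature

variable {h k : ℂ → ℝ} {z : ℂ}

/- `curvNum h` is `h² ∂∂̄ log h`, which explains this Leibniz rule. -/
theorem curvNum_mul (hh : ContDiffAt ℝ 2 h z) (hk : ContDiffAt ℝ 2 k z) :
    curvNum (fun x => h x * k x) z = h z ^ 2 * curvNum k z + k z ^ 2 * curvNum h z := by
  have h1 := hh.differentiableAt two_ne_zero
  have k1 := hk.differentiableAt two_ne_zero
  rw [curvNum, wlapR_mul hh hk, wdzR_mul h1 k1, wdzbarR_mul h1 k1, curvNum, curvNum, ofReal_mul]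
  ring

theorem gaussCurv_mul (hh : ContDiffAt ℝ 2 h z) (hk : ContDiffAt ℝ 2 k z)
    (h0 : h z ≠ 0) (k0 : k z ≠ 0) :
    gaussCurv (fun x => h x * k x) z = gaussCurv h z / k z + gaussCurv k z / h z := by
  have h0' := ofReal_ne_zero.2 h0
  have k0' := ofReal_ne_zero.2 k0
  rw [gaussCurv, curvNum_mul hh hk, gaussCurv, gaussCurv, ofReal_mul]
  field_simp
  ring

theorem gaussCurv_congr (hhk : h =ᶠ[𝓝 z] k) : gaussCurv h z = gaussCurv k z := by
  have hcoe : (fun x => (h x : ℂ)) =ᶠ[𝓝 z] fun x => (k x : ℂ) := hhk.fun_comp ofReal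
  have hbar : wdzbarR h =ᶠ[𝓝 z] wdzbarR k :=
    hcoe.eventuallyEq_nhds.mono fun _ => wdzbar_congr
  rw [gaussCurv, gaussCurv, curvNum, curvNum, wlapR, wlapR, wdzR, wdzR, hhk.eq_of_nhds,
    wdz_congr hbar, hbar.eq_of_nhds, wdz_congr hcoe]

theorem gaussCurv_const (c : ℝ) : gaussCurv (fun _ => c) z = 0 := by
  simp [gaussCurv, curvNum, wdzR_const, wlapR_const]

theorem gaussCurv_inv (hh : ContDiffAt ℝ 2 h z) (h0 : h z ≠ 0) :
    gaussCurv (fun x => (h x)⁻¹) z = -h z ^ 2 * gaussCurv h z := by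
  have hone : (fun x => h x * (h x)⁻¹) =ᶠ[𝓝 z] fun _ => 1 :=
    (hh.continuousAt.eventually_ne h0).mono fun _ => mul_inv_cancel₀
  have hsum := gaussCurv_mul hh (k := fun x => (h x)⁻¹) (hh.inv h0) h0 (inv_ne_zero h0)
  rw [gaussCurv_congr hone, gaussCurv_const] at hsum
  rw [ofReal_inv, div_inv_eq_mul] at hsum
  have h0' := ofReal_ne_zero.2 h0
  field_simp at hsum ⊢
  linear_combination -hsum

end Curvature

section Holomorphic

variable {w : ℂ → ℂ} {z : ℂ}

theorem wdz_mul_conj {v : ℂ → ℂ} (hw : DifferentiableAt ℂ w z) (hv : DifferentiableAt ℂ v z) :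
    wdz (fun x => w x * conj (v x)) z = conj (v z) * deriv w z := by
  have hv' := hv.restrictScalars ℝ
  have hconj : DifferentiableAt ℝ (fun x => conj (v x)) z := conjCLE.differentiableAt.comp z hv'
  rw [wdz_mul (hw.restrictScalars ℝ) hconj, wdz_conj hv', wdzbar_eq_zero hv, wdz_eq_deriv hw,
    map_zero, mul_zero, zero_add]

theorem contDiffAt_norm_sq (hw : AnalyticAt ℂ w z) : ContDiffAt ℝ 2 (fun x => ‖w x‖ ^ 2) z :=
  (hw.contDiffAt.restrict_scalars ℝ).norm_sq ℝ

theorem wdzR_norm_sq (hw : AnalyticAt ℂ w z) :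
    wdzR (fun x => ‖w x‖ ^ 2) z = conj (w z) * deriv w z := by
  have hcoe : (fun x => ((‖w x‖ ^ 2 : ℝ) : ℂ)) = fun x => w x * conj (w x) := by
    simp only [mul_conj', ofReal_pow]
  rw [wdzR, hcoe, wdz_mul_conj hw.differentiableAt hw.differentiableAt]

theorem wdzbarR_norm_sq (hw : AnalyticAt ℂ w z) :
    wdzbarR (fun x => ‖w x‖ ^ 2) z = w z * conj (deriv w z) := by
  rw [← conj_wdzR ((contDiffAt_norm_sq hw).differentiableAt two_ne_zero), wdzR_norm_sq hw,
    map_mul, conj_conj]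

theorem wlapR_norm_sq (hw : AnalyticAt ℂ w z) :
    wlapR (fun x => ‖w x‖ ^ 2) z = ‖deriv w z‖ ^ 2 := by
  have hbar : wdzbarR (fun x => ‖w x‖ ^ 2) =ᶠ[𝓝 z] fun x => w x * conj (deriv w x) :=
    hw.eventually_analyticAt.mono fun _ => wdzbarR_norm_sq
  rw [wlapR, wdz_congr hbar, wdz_mul_conj hw.differentiableAt hw.deriv.differentiableAt, conj_mul']

theorem curvNum_norm_sq (hw : AnalyticAt ℂ w z) : curvNum (fun x => ‖w x‖ ^ 2) z = 0 := by
  rw [curvNum, wlapR_norm_sq hw, wdzR_norm_sq hw, wdzbarR_norm_sq hw, ofReal_pow, ← conj_mul',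
    ← conj_mul']
  ring

theorem contDiffAt_log_norm_sq (hw : AnalyticAt ℂ w z) (h0 : w z ≠ 0) :
    ContDiffAt ℝ 2 (fun x => Real.log (‖w x‖ ^ 2)) z :=
  (contDiffAt_norm_sq hw).log (by simpa using h0)

theorem wdzR_log_norm_sq (hw : AnalyticAt ℂ w z) (h0 : w z ≠ 0) :
    wdzR (fun x => Real.log (‖w x‖ ^ 2)) z = deriv w z / w z := by
  have h0' : (‖w z‖ ^ 2 : ℝ) ≠ 0 := by simpa using h0
  rw [wdzR_comp (Real.hasDerivAt_log h0') ((contDiffAt_norm_sq hw).differentiableAt two_ne_zero),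
    wdzR_norm_sq hw, ofReal_inv, ofReal_pow, ← conj_mul']
  have := (map_ne_zero conj).2 h0
  field_simp

theorem wdzbarR_log_norm_sq (hw : AnalyticAt ℂ w z) (h0 : w z ≠ 0) :
    wdzbarR (fun x => Real.log (‖w x‖ ^ 2)) z = conj (deriv w z / w z) := by
  rw [← conj_wdzR ((contDiffAt_log_norm_sq hw h0).differentiableAt two_ne_zero),
    wdzR_log_norm_sq hw h0]

theorem wlapR_log_norm_sq (hw : AnalyticAt ℂ w z) (h0 : w z ≠ 0) :
    wlapR (fun x => Real.log (‖w x‖ ^ 2)) z = 0 := by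
  have hbar : wdzbarR (fun x => Real.log (‖w x‖ ^ 2)) =ᶠ[𝓝 z]
      fun x => conj (deriv w x / w x) := by
    filter_upwards [hw.eventually_analyticAt, hw.continuousAt.eventually_ne h0]
      with x hx hx0 using wdzbarR_log_norm_sq hx hx0
  have hd : DifferentiableAt ℂ (fun x => deriv w x / w x) z :=
    hw.deriv.differentiableAt.div hw.differentiableAt h0
  rw [wlapR, wdz_congr hbar, wdz_conj (hd.restrictScalars ℝ), wdzbar_eq_zero hd, map_zero]

theorem curvNum_log_norm_sq (hw : AnalyticAt ℂ w z) (h0 : w z ≠ 0) :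
    curvNum (fun x => Real.log (‖w x‖ ^ 2)) z = -(‖deriv w z‖ ^ 2 / ‖w z‖ ^ 2) := by
  rw [curvNum, wlapR_log_norm_sq hw h0, wdzR_log_norm_sq hw h0, wdzbarR_log_norm_sq hw h0,
    mul_conj', norm_div, ofReal_div]
  ring

end Holomorphic

section Cusp

variable {w : ℂ → ℂ} {z : ℂ}

/-- The weight `|w|² (log |w|²)²`, whose reciprocal is, up to scaling, the density of the complete
hyperbolic metric of the punctured unit disc. -/
noncomputable def cuspWeight (w : ℂ) : ℝ := ‖w‖ ^ 2 * Real.log (‖w‖ ^ 2) ^ 2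

theorem cuspWeight_pos {c : ℂ} (h0 : c ≠ 0) (h1 : ‖c‖ ≠ 1) : 0 < cuspWeight c := by
  have hlog : Real.log (‖c‖ ^ 2) ≠ 0 := by
    simpa [Real.log_pow, h0, h1] using (neg_one_lt_zero.trans_le (norm_nonneg c)).ne'
  unfold cuspWeight
  positivity

theorem contDiffAt_cuspWeight (hw : AnalyticAt ℂ w z) (h0 : w z ≠ 0) :
    ContDiffAt ℝ 2 (fun x => cuspWeight (w x)) z :=
  (contDiffAt_norm_sq hw).mul ((contDiffAt_log_norm_sq hw h0).pow 2)

theorem wdzR_cuspWeight (hw : AnalyticAt ℂ w z) (h0 : w z ≠ 0) :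
    wdzR (fun x => cuspWeight (w x)) z = conj (w z) *
      (Real.log (‖w z‖ ^ 2) ^ 2 + 2 * Real.log (‖w z‖ ^ 2) : ℝ) * deriv w z := by
  have hN := (contDiffAt_norm_sq hw).differentiableAt two_ne_zero
  have hL := (contDiffAt_log_norm_sq hw h0).differentiableAt two_ne_zero
  simp only [cuspWeight, sq (Real.log _)]
  rw [wdzR_mul hN (hL.fun_mul hL), wdzR_mul hL hL, wdzR_norm_sq hw, wdzR_log_norm_sq hw h0]
  push_cast
  rw [← conj_mul']
  field_simp
  ring

theorem curvNum_cuspWeight (hw : AnalyticAt ℂ w z) (h0 : w z ≠ 0) :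
    curvNum (fun x => cuspWeight (w x)) z = -2 * cuspWeight (w z) * ‖deriv w z‖ ^ 2 := by
  have hL := contDiffAt_log_norm_sq hw h0
  simp only [cuspWeight, sq (Real.log _)]
  rw [curvNum_mul (contDiffAt_norm_sq hw) (hL.mul hL), curvNum_mul hL hL, curvNum_norm_sq hw,
    curvNum_log_norm_sq hw h0]
  have : (‖w z‖ : ℂ) ≠ 0 := by simpa using h0
  push_cast
  field_simp
  ring

theorem gaussCurv_cuspWeight_inv (hw : AnalyticAt ℂ w z) (h0 : w z ≠ 0) (h1 : ‖w z‖ ≠ 1) :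
    gaussCurv (fun x => (cuspWeight (w x))⁻¹) z = -4 * ‖deriv w z‖ ^ 2 := by
  have hP := (cuspWeight_pos h0 h1).ne'
  have hP' := ofReal_ne_zero.2 hP
  rw [gaussCurv_inv (contDiffAt_cuspWeight hw h0) hP, gaussCurv, curvNum_cuspWeight hw h0]
  field_simp
  ring

end Cusp

section CuspLimits

theorem continuous_norm_mul_log_sq : Continuous fun c : ℂ => ‖c‖ * Real.log ‖c‖ ^ 2 := by
  have hsqrt (c : ℂ) : ‖c‖ * Real.log ‖c‖ ^ 2 = 4 * (√‖c‖ * Real.log √‖c‖) ^ 2 := by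
    rw [mul_pow, Real.sq_sqrt (norm_nonneg c), Real.log_sqrt (norm_nonneg c)]
    ring
  simp only [hsqrt]
  have := Real.continuous_mul_log.comp (Real.continuous_sqrt.comp (continuous_norm (E := ℂ)))
  exact continuous_const.mul (this.pow 2)

theorem tendsto_cuspWeight_zero : Tendsto cuspWeight (𝓝 0) (𝓝 0) := by
  have hP : cuspWeight = fun c => 4 * (‖c‖ * (‖c‖ * Real.log ‖c‖ ^ 2)) := by
    ext c
    rw [cuspWeight, Real.log_pow]
    push_cast
    ring
  have hcont : Continuous cuspWeight :=
    hP ▸ continuous_const.mul (continuous_norm.mul continuous_norm_mul_log_sq)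
  simpa [cuspWeight] using hcont.tendsto 0

theorem tendsto_conj_mul_log_sq_add_log :
    Tendsto (fun c : ℂ => conj c * (Real.log (‖c‖ ^ 2) ^ 2 + 2 * Real.log (‖c‖ ^ 2) : ℝ))
      (𝓝 0) (𝓝 0) := by
  have hcont : Continuous fun c : ℂ =>
      |4 * (‖c‖ * Real.log ‖c‖ ^ 2) + 4 * (‖c‖ * Real.log ‖c‖)| :=
    ((continuous_const.mul continuous_norm_mul_log_sq).add
      (continuous_const.mul (Real.continuous_mul_log.comp continuous_norm))).abs
  have hnorm (c : ℂ) : ‖conj c * (Real.log (‖c‖ ^ 2) ^ 2 + 2 * Real.log (‖c‖ ^ 2) : ℝ)‖ =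
      |4 * (‖c‖ * Real.log ‖c‖ ^ 2) + 4 * (‖c‖ * Real.log ‖c‖)| := by
    rw [norm_mul, norm_real, norm_conj, Real.norm_eq_abs, ← abs_of_nonneg (norm_nonneg c),
      ← abs_mul, abs_of_nonneg (norm_nonneg c), Real.log_pow]
    push_cast
    ring_nf
  rw [tendsto_zero_iff_norm_tendsto_zero]
  simp only [hnorm]
  simpa using hcont.tendsto 0

end CuspLimits

section Tame

variable {α : Type*} {l : Filter α} {P : α → ℝ} {z : ℂ} {F G : α → ℂ → ℝ} {w : α → ℂ → ℂ}

/-- A family of real functions that is negligible at second order, relative to the weights `P`, at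
the point `z`: values and first derivatives stay bounded, and `P ∂∂̄F` tends to zero. If `P a` is
the value at `z` of `1 / h a` for metrics `h a`, multiplying them by such an `F` that tends to `1`
does not change the limit of the curvatures. -/
structure IsTame (l : Filter α) (P : α → ℝ) (z : ℂ) (F : α → ℂ → ℝ) : Prop where
  contDiffAt : ∀ᶠ a in l, ContDiffAt ℝ 2 (F a) z
  isBigO : (fun a => F a z) =O[l] fun _ => (1 : ℝ)
  wdzR_isBigO : (fun a => wdzR (F a) z) =O[l] fun _ => (1 : ℝ)
  wlapR_isLittleO : (fun a => P a * wlapR (F a) z) =o[l] fun _ => (1 : ℝ)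

theorem isBigO_conj_left {v : α → ℂ} {b : α → ℝ} :
    (fun a => conj (v a)) =O[l] b ↔ v =O[l] b := by
  rw [← isBigO_norm_left, ← isBigO_norm_left (f' := v)]
  simp only [norm_conj]

theorem IsTame.wdzbarR_isBigO (hF : IsTame l P z F) :
    (fun a => wdzbarR (F a) z) =O[l] fun _ => (1 : ℝ) := by
  have hconj : (fun a => wdzbarR (F a) z) =ᶠ[l] fun a => conj (wdzR (F a) z) :=
    hF.contDiffAt.mono fun a hFa => (conj_wdzR (hFa.differentiableAt two_ne_zero)).symm
  exact hconj.isBigO.trans (isBigO_conj_left.2 hF.wdzR_isBigO)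

theorem isTame_const (c : ℝ) : IsTame l P z fun _ _ => c where
  contDiffAt := .of_forall fun _ => contDiffAt_const
  isBigO := isBigO_const_const c one_ne_zero l
  wdzR_isBigO := by simp only [wdzR_const, Pi.zero_apply, isBigO_zero]
  wlapR_isLittleO := by simp only [wlapR_const, Pi.zero_apply, mul_zero, isLittleO_zero]

theorem IsTame.add (hF : IsTame l P z F) (hG : IsTame l P z G) :
    IsTame l P z fun a x => F a x + G a x where
  contDiffAt := hF.contDiffAt.mp (hG.contDiffAt.mono fun _ h k => k.add h)
  isBigO := hF.isBigO.add hG.isBigO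
  wdzR_isBigO := by
    refine (hF.wdzR_isBigO.add hG.wdzR_isBigO).congr' ?_ .rfl
    filter_upwards [hF.contDiffAt, hG.contDiffAt] with a hFa hGa
    exact (wdzR_add (hFa.differentiableAt two_ne_zero) (hGa.differentiableAt two_ne_zero)).symm
  wlapR_isLittleO := by
    refine (hF.wlapR_isLittleO.add hG.wlapR_isLittleO).congr' ?_ .rfl
    filter_upwards [hF.contDiffAt, hG.contDiffAt] with a hFa hGa
    rw [wlapR_add hFa hGa, mul_add]

theorem IsTame.mul (hP : Tendsto P l (𝓝 0)) (hF : IsTame l P z F) (hG : IsTame l P z G) :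
    IsTame l P z fun a x => F a x * G a x where
  contDiffAt := hF.contDiffAt.mp (hG.contDiffAt.mono fun _ h k => k.mul h)
  isBigO := by simpa using hF.isBigO.mul hG.isBigO
  wdzR_isBigO := by
    have hFG := (isBigO_ofReal_left.2 hF.isBigO).mul hG.wdzR_isBigO
    have hGF := (isBigO_ofReal_left.2 hG.isBigO).mul hF.wdzR_isBigO
    refine (hFG.add hGF).congr' ?_ (by simp)
    filter_upwards [hF.contDiffAt, hG.contDiffAt] with a hFa hGa
    exact (wdzR_mul (hFa.differentiableAt two_ne_zero) (hGa.differentiableAt two_ne_zero)).symm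
  wlapR_isLittleO := by
    have hP' : (fun a => (P a : ℂ)) =o[l] fun _ => (1 : ℝ) :=
      isLittleO_ofReal_left.2 ((isLittleO_one_iff ℝ).2 hP)
    have hFlap := (isBigO_ofReal_left.2 hF.isBigO).mul_isLittleO hG.wlapR_isLittleO
    have hGlap := (isBigO_ofReal_left.2 hG.isBigO).mul_isLittleO hF.wlapR_isLittleO
    have hFG := hP'.mul_isBigO (hF.wdzR_isBigO.mul hG.wdzbarR_isBigO)
    have hGF := hP'.mul_isBigO (hG.wdzR_isBigO.mul hF.wdzbarR_isBigO)
    simp only [mul_one] at hFlap hGlap hFG hGF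
    refine ((hFlap.add hFG).add (hGlap.add hGF)).congr' ?_ .rfl
    filter_upwards [hF.contDiffAt, hG.contDiffAt] with a hFa hGa
    rw [wlapR_mul hFa hGa]
    ring

theorem isTame_norm_sq (hP : Tendsto P l (𝓝 0)) (hw : ∀ᶠ a in l, AnalyticAt ℂ (w a) z)
    (hw0 : (fun a => w a z) =O[l] fun _ => (1 : ℝ))
    (hw1 : (fun a => deriv (w a) z) =O[l] fun _ => (1 : ℝ)) :
    IsTame l P z fun a x => ‖w a x‖ ^ 2 where
  contDiffAt := hw.mono fun _ => contDiffAt_norm_sq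
  isBigO := by simpa using hw0.norm_left.pow 2
  wdzR_isBigO := by
    refine ((isBigO_conj_left.2 hw0).mul hw1).congr' ?_ (by simp)
    exact hw.mono fun a ha => (wdzR_norm_sq ha).symm
  wlapR_isLittleO := by
    have hP' : (fun a => (P a : ℂ)) =o[l] fun _ => (1 : ℝ) :=
      isLittleO_ofReal_left.2 ((isLittleO_one_iff ℝ).2 hP)
    have hsq := isBigO_ofReal_left.2 (hw1.norm_left.pow 2)
    refine (hP'.mul_isBigO hsq).congr' ?_ (by simp)
    exact hw.mono fun a ha => by simp only [wlapR_norm_sq ha, ofReal_pow]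

theorem wdzR_cuspWeight_isLittleO (hw : ∀ᶠ a in l, AnalyticAt ℂ (w a) z)
    (hw0 : Tendsto (fun a => w a z) l (𝓝[≠] 0))
    (hw1 : (fun a => deriv (w a) z) =O[l] fun _ => (1 : ℝ)) :
    (fun a => wdzR (fun x => cuspWeight (w a x)) z) =o[l] fun _ => (1 : ℝ) := by
  obtain ⟨hlim, hne⟩ := tendsto_nhdsWithin_iff.1 hw0
  have hcoef := (isLittleO_one_iff ℝ).2 (tendsto_conj_mul_log_sq_add_log.comp hlim)
  refine (hcoef.mul_isBigO hw1).congr' ?_ (by simp)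
  filter_upwards [hw, hne] with a ha ha0 using (wdzR_cuspWeight ha ha0).symm

theorem isTame_cuspWeight (hw : ∀ᶠ a in l, AnalyticAt ℂ (w a) z)
    (hw0 : Tendsto (fun a => w a z) l (𝓝[≠] 0))
    (hw1 : (fun a => deriv (w a) z) =O[l] fun _ => (1 : ℝ)) :
    IsTame l (fun a => cuspWeight (w a z)) z fun a x => cuspWeight (w a x) := by
  obtain ⟨hlim, hne⟩ := tendsto_nhdsWithin_iff.1 hw0
  have hP := (isLittleO_one_iff ℝ).2 (tendsto_cuspWeight_zero.comp hlim)
  have hdP := wdzR_cuspWeight_isLittleO hw hw0 hw1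
  have hC : ∀ᶠ a in l, ContDiffAt ℝ 2 (fun x => cuspWeight (w a x)) z := by
    filter_upwards [hw, hne] with a ha ha0 using contDiffAt_cuspWeight ha ha0
  refine ⟨hC, hP.isBigO, hdP.isBigO, ?_⟩
  have hgrad := hdP.mul_isBigO (isBigO_conj_left.2 hdP.isBigO)
  have hsq := ((isLittleO_ofReal_left.2 hP).mul_isBigO
    (isBigO_ofReal_left.2 (hw1.norm_left.pow 2))).const_mul_left 2
  simp only [mul_one, one_pow] at hgrad hsq
  refine (hgrad.sub hsq).congr' ?_ .rfl
  filter_upwards [hw, hne, hC] with a ha ha0 hCa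
  have hnum := curvNum_cuspWeight ha ha0
  rw [curvNum, ← conj_wdzR (hCa.differentiableAt two_ne_zero)] at hnum
  simp only [Function.comp_apply, ofReal_pow]
  linear_combination -hnum

theorem IsTame.tendsto_mul_gaussCurv (hP : Tendsto P l (𝓝 0)) (hF : IsTame l P z F)
    (hF1 : Tendsto (fun a => F a z) l (𝓝 1)) :
    Tendsto (fun a => P a * gaussCurv (F a) z) l (𝓝 0) := by
  have hP' : (fun a => (P a : ℂ)) =o[l] fun _ => (1 : ℝ) :=
    isLittleO_ofReal_left.2 ((isLittleO_one_iff ℝ).2 hP)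
  have hlap := (isBigO_ofReal_left.2 hF.isBigO).mul_isLittleO hF.wlapR_isLittleO
  have hgrad := hP'.mul_isBigO (hF.wdzR_isBigO.mul hF.wdzbarR_isBigO)
  simp only [mul_one] at hlap hgrad
  have hnum := (isLittleO_one_iff ℝ).1 (hlap.sub hgrad)
  have hF1' : Tendsto (fun a => (F a z : ℂ)) l (𝓝 1) := by
    exact_mod_cast (continuous_ofReal.tendsto 1).comp hF1
  have := (hnum.const_mul (-2)).div (hF1'.pow 3) (by norm_num)
  rw [mul_zero, zero_div] at this
  refine this.congr fun a => ?_
  rw [Pi.div_apply, gaussCurv, curvNum]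
  ring

end Tame

section CuspPerturbation

variable {α : Type*} {l : Filter α} {z : ℂ} {s : α → ℂ → ℝ} {w : α → ℂ → ℂ}

theorem one_add_norm_sq_mul_u_sq_add {c : ℂ} (h0 : c ≠ 0) (h1 : ‖c‖ ≠ 1) (s : ℝ) :
    1 + ‖c‖ ^ 2 * u (‖c‖ ^ 2) ^ 2 + s =
      (cuspWeight c)⁻¹ * ((1 + -1 * ‖c‖ ^ 2) * (1 + -1 * ‖c‖ ^ 2) + cuspWeight c * (1 + s)) := by
  have hP := (cuspWeight_pos h0 h1).ne'
  have hlog : Real.log (‖c‖ ^ 2) ≠ 0 := fun hL => hP (by simp [cuspWeight, hL])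
  have hc : ‖c‖ ≠ 0 := norm_ne_zero_iff.2 h0
  have h1' : ‖c‖ ^ 2 ≠ 1 := mt (pow_eq_one_iff_of_nonneg (norm_nonneg c) two_ne_zero).1 h1
  rw [u, if_neg h1', cuspWeight]
  field_simp
  ring

theorem tendsto_gaussCurv_cuspWeight_inv_mul {D : α → ℂ → ℝ}
    (hw : ∀ᶠ a in l, AnalyticAt ℂ (w a) z) (hw0 : Tendsto (fun a => w a z) l (𝓝[≠] 0))
    (hw1 : ∀ᶠ a in l, deriv (w a) z = 1) (hD : IsTame l (fun a => cuspWeight (w a z)) z D)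
    (hD1 : Tendsto (fun a => D a z) l (𝓝 1)) :
    Tendsto (fun a => gaussCurv (fun x => (cuspWeight (w a x))⁻¹ * D a x) z) l (𝓝 (-4)) := by
  obtain ⟨hlim, hne⟩ := tendsto_nhdsWithin_iff.1 hw0
  have hnorm : ∀ᶠ a in l, ‖w a z‖ ≠ 1 := hlim.norm.eventually_ne (by simp)
  have hcurv : ∀ᶠ a in l, -4 * (D a z : ℂ)⁻¹ + cuspWeight (w a z) * gaussCurv (D a) z =
      gaussCurv (fun x => (cuspWeight (w a x))⁻¹ * D a x) z := by
    filter_upwards [hw, hne, hnorm, hw1, hD.contDiffAt, hD1.eventually_ne one_ne_zero]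
      with a ha ha0 ha1 hda hDa hDa0
    have hP := (cuspWeight_pos ha0 ha1).ne'
    rw [gaussCurv_mul ((contDiffAt_cuspWeight ha ha0).fun_inv hP) hDa (inv_ne_zero hP) hDa0,
      gaussCurv_cuspWeight_inv ha ha0 ha1, hda, norm_one, ofReal_one, ofReal_inv, div_inv_eq_mul]
    ring
  have hD1' : Tendsto (fun a => (D a z : ℂ)) l (𝓝 1) := by
    exact_mod_cast (continuous_ofReal.tendsto 1).comp hD1
  have hmodel : Tendsto (fun a => -4 * (D a z : ℂ)⁻¹) l (𝓝 (-4)) := by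
    simpa using (hD1'.inv₀ one_ne_zero).const_mul (-4)
  have hP := tendsto_cuspWeight_zero.comp hlim
  simpa using (hmodel.add (hD.tendsto_mul_gaussCurv hP hD1)).congr' hcurv

theorem tendsto_gaussCurv_neg_four (hw : ∀ᶠ a in l, AnalyticAt ℂ (w a) z)
    (hw0 : Tendsto (fun a => w a z) l (𝓝[≠] 0)) (hw1 : ∀ᶠ a in l, deriv (w a) z = 1)
    (hs : IsTame l (fun a => cuspWeight (w a z)) z s) :
    Tendsto (fun a => gaussCurv (fun x => 1 + ‖w a x‖ ^ 2 * u (‖w a x‖ ^ 2) ^ 2 + s a x) z) l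
      (𝓝 (-4)) := by
  obtain ⟨hlim, hne⟩ := tendsto_nhdsWithin_iff.1 hw0
  have hP := tendsto_cuspWeight_zero.comp hlim
  have hw1O : (fun a => deriv (w a) z) =O[l] fun _ => (1 : ℝ) :=
    (isBigO_const_const (1 : ℂ) one_ne_zero l).congr' (hw1.mono fun _ h => h.symm) .rfl
  have hone : IsTame l (fun a => cuspWeight (w a z)) z fun a x => 1 + -1 * ‖w a x‖ ^ 2 :=
    (isTame_const 1).add (.mul hP (isTame_const (-1))
      (isTame_norm_sq hP hw (hlim.isBigO_one ℝ) hw1O))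
  have hs' := (isTame_const 1).add hs
  have hD := (hone.mul hP hone).add ((isTame_cuspWeight hw hw0 hw1O).mul hP hs')
  have hPs : Tendsto (fun a => cuspWeight (w a z) * (1 + s a z)) l (𝓝 0) := by
    simpa [isLittleO_one_iff] using ((isLittleO_one_iff ℝ).2 hP).mul_isBigO hs'.isBigO
  have hsq : Tendsto (fun a => 1 + -1 * ‖w a z‖ ^ 2) l (𝓝 1) := by
    simpa using ((hlim.norm.pow 2).const_mul (-1)).const_add 1
  have hD1 := (hsq.mul hsq).add hPs
  rw [mul_one, add_zero] at hD1
  refine (tendsto_gaussCurv_cuspWeight_inv_mul hw hw0 hw1 hD hD1).congr' ?_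
  have hnorm : ∀ᶠ a in l, ‖w a z‖ ≠ 1 := hlim.norm.eventually_ne (by simp)
  filter_upwards [hw, hne, hnorm] with a ha ha0 ha1
  refine gaussCurv_congr ?_
  filter_upwards [ha.continuousAt.eventually_ne ha0, ha.continuousAt.norm.eventually_ne ha1]
    with x hx0 hx1 using (one_add_norm_sq_mul_u_sq_add hx0 hx1 (s a x)).symm

end CuspPerturbation

section Cauchy

variable {E F : Type*} [NormedAddCommGroup E] [NormedSpace ℂ E] [NormedAddCommGroup F]
  [NormedSpace ℂ F] {f : E → F} {q : E}

theorem norm_fderiv_le_of_forall_norm_le {R C : ℝ} (hR : 0 < R)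
    (hf : DifferentiableOn ℂ f (ball q R)) (hC : ∀ x ∈ ball q R, ‖f x‖ ≤ C) :
    ‖fderiv ℂ f q‖ ≤ 2 * C / R := by
  refine norm_fderiv_le_div_of_mapsTo_ball hf (fun x hx => ?_) hR
  rw [mem_closedBall, dist_eq_norm]
  linarith [norm_sub_le (f x) (f q), hC x hx, hC q (mem_ball_self hR)]

theorem exists_lipschitzOnWith_of_eventually_differentiableAt
    (hf : ∀ᶠ x in 𝓝 q, DifferentiableAt ℂ f x) :
    ∃ K, ∃ s ∈ 𝓝 q, LipschitzOnWith K f s := by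
  have hbdd : ∀ᶠ x in 𝓝 q, ‖f x‖ < ‖f q‖ + 1 :=
    hf.self_of_nhds.continuousAt.norm.eventually_lt_const (lt_add_one _)
  obtain ⟨R, hR, hball⟩ := Metric.eventually_nhds_iff_ball.1 (hf.and hbdd)
  refine ⟨(2 * (‖f q‖ + 1) / (R / 2)).toNNReal, ball q (R / 2), ball_mem_nhds q (half_pos hR),
    (convex_ball q _).lipschitzOnWith_of_nnnorm_fderiv_le (𝕜 := ℂ) (fun x hx => ?_) fun x hx => ?_⟩
  · exact (hball x (ball_subset_ball (half_le_self hR.le) hx)).1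
  · exact NNReal.le_toNNReal_of_coe_le (norm_fderiv_le_of_forall_norm_le (half_pos hR)
      (fun y hy => (hball y (ball_half_subset _ hx hy)).1.differentiableWithinAt)
      fun y hy => (hball y (ball_half_subset _ hx hy)).2.le)

theorem exists_lipschitzOnWith_fderiv (hf : ∀ᶠ x in 𝓝 q, DifferentiableAt ℂ f x) :
    ∃ K, ∃ s ∈ 𝓝 q, LipschitzOnWith K (fderiv ℂ f) s := by
  obtain ⟨K, s, hs, hlip⟩ := exists_lipschitzOnWith_of_eventually_differentiableAt hf
  obtain ⟨R, hR, hball⟩ := Metric.eventually_nhds_iff_ball.1 (hf.and hs)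
  have hR2 := half_pos hR
  refine ⟨(2 * K / (R / 2)).toNNReal, ball q (R / 2), ball_mem_nhds q hR2,
    .of_dist_le_mul fun y hy x hx => ?_⟩
  have hshift {ξ : E} (hξ : ξ ∈ ball x (R / 2)) : ξ + (y - x) ∈ ball q R :=
    ball_half_subset _ hy (by simpa [dist_eq_norm, add_sub_right_comm] using hξ)
  have hdiff {ξ : E} (hξ : ξ ∈ ball x (R / 2)) : HasFDerivAt (fun ξ => f (ξ + (y - x)) - f ξ)
      (fderiv ℂ f (ξ + (y - x)) - fderiv ℂ f ξ) ξ :=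
    ((hasFDerivAt_comp_add_right (y - x)).2 (hball _ (hshift hξ)).1.hasFDerivAt).sub
      (hball _ (ball_half_subset _ hx hξ)).1.hasFDerivAt
  have hderiv := (hdiff (mem_ball_self hR2)).fderiv
  rw [add_sub_cancel] at hderiv
  rw [dist_eq_norm, ← hderiv, Real.coe_toNNReal _ (by positivity)]
  refine (norm_fderiv_le_of_forall_norm_le hR2 (C := K * dist y x)
    (fun ξ hξ => (hdiff hξ).differentiableAt.differentiableWithinAt) fun ξ hξ => ?_).trans_eq
      (by ring)
  rw [← dist_eq_norm]
  refine (hlip.dist_le_mul _ (hball _ (hshift hξ)).2 _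
    (hball _ (ball_half_subset _ hx hξ)).2).trans_eq ?_
  rw [dist_self_add_left, dist_eq_norm]

theorem continuousAt_fderiv (hf : ∀ᶠ x in 𝓝 q, DifferentiableAt ℂ f x) :
    ContinuousAt (fderiv ℂ f) q :=
  let ⟨_, _, hs, hlip⟩ := exists_lipschitzOnWith_fderiv hf
  hlip.continuousOn.continuousAt hs

theorem differentiableAt_of_tendstoUniformlyOn_ball [CompleteSpace F] {ι : Type*} {l : Filter ι}
    [l.NeBot] {G : ι → E → F} {R : ℝ} (hR : 0 < R) (hG : TendstoUniformlyOn G f l (ball q R))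
    (hd : ∀ᶠ i in l, DifferentiableOn ℂ (G i) (ball q R)) : DifferentiableAt ℂ f q := by
  have hR2 := half_pos hR
  have hdiff {i : ι} (hi : DifferentiableOn ℂ (G i) (ball q R)) {x : E} (hx : x ∈ ball q R) :
      DifferentiableAt ℂ (G i) x := hi.differentiableAt (isOpen_ball.mem_nhds hx)
  have hcauchy : UniformCauchySeqOn (fun i => fderiv ℂ (G i)) l (ball q (R / 2)) := by
    have hG' := hG.uniformCauchySeqOn
    rw [SeminormedAddGroup.uniformCauchySeqOn_iff_tendstoUniformlyOn_zero,
      Metric.tendstoUniformlyOn_iff] at hG' ⊢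
    intro ε hε
    filter_upwards [hG' (ε * R / 8) (by positivity), prod_mem_prod hd hd]
      with ⟨i, j⟩ hij ⟨hi, hj⟩ x hx
    have hx' := ball_half_subset x hx
    have hxR : x ∈ ball q R := hx' (mem_ball_self hR2)
    simp only [Pi.zero_apply, dist_zero_left, neg_add_eq_sub] at hij ⊢
    rw [← fderiv_sub (hdiff hj hxR) (hdiff hi hxR)]
    refine (norm_fderiv_le_of_forall_norm_le hR2 ((hj.sub hi).mono hx')
      fun y hy => (hij y (hx' hy)).le).trans_lt ?_
    field_simp
    norm_num
  have hlim (x : E) (hx : x ∈ ball q (R / 2)) :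
      Tendsto (fun i => fderiv ℂ (G i) x) l (𝓝 (limUnder l fun i => fderiv ℂ (G i) x)) :=
    (hcauchy.cauchy_map hx).le_nhds_lim
  have hmem := ball_mem_nhds q hR2
  refine (hasFDerivAt_of_tendstoUniformlyOnFilter (f := G) (l := l)
    (tendstoUniformlyOn_iff_tendstoUniformlyOnFilter.1
      (hcauchy.tendstoUniformlyOn_of_tendsto hlim) |>.mono_right (le_principal_iff.2 hmem))
    ?_ ?_).differentiableAt
  · filter_upwards [prod_mem_prod hd hmem] with ⟨i, x⟩ ⟨hi, hx⟩
    exact (hdiff hi (ball_subset_ball (half_le_self hR.le) hx)).hasFDerivAt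
  · filter_upwards [hmem] with x hx using hG.tendsto_at (ball_subset_ball (half_le_self hR.le) hx)

theorem norm_sub_sub_fderiv_le {K : ℝ≥0} {R : ℝ} (hf : ∀ x ∈ ball q R, DifferentiableAt ℂ f x)
    (hlip : LipschitzOnWith K (fderiv ℂ f) (ball q R)) {x v : E} (hxv : dist x q + ‖v‖ < R) :
    ‖f (x + v) - f x - fderiv ℂ f x v‖ ≤ K * ‖v‖ ^ 2 := by
  have hsub : closedBall x ‖v‖ ⊆ ball q R := closedBall_subset_ball' (by rwa [add_comm])
  have hx : x ∈ closedBall x ‖v‖ := mem_closedBall_self (norm_nonneg v)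
  have hmean := (convex_closedBall x ‖v‖).norm_image_sub_le_of_norm_fderiv_le' (𝕜 := ℂ)
    (φ := fderiv ℂ f x) (C := K * ‖v‖) (y := x + v) (fun y hy => hf y (hsub hy)) (fun y hy => ?_)
    hx (by simp)
  · rwa [add_sub_cancel_left, mul_assoc, ← sq] at hmean
  · rw [← dist_eq_norm]
    exact (hlip.dist_le_mul _ (hsub hy) _ (hsub hx)).trans (by gcongr; exact hy)

theorem exists_tendstoUniformlyOn_slope (hf : ∀ᶠ x in 𝓝 q, DifferentiableAt ℂ f x) (v : E) :
    ∃ R > 0, TendstoUniformlyOn (fun (t : ℂ) x => t⁻¹ • (f (x + t • v) - f x))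
      (fun x => fderiv ℂ f x v) (𝓝[≠] 0) (ball q R) := by
  obtain ⟨K, s, hs, hlip⟩ := exists_lipschitzOnWith_fderiv hf
  obtain ⟨R, hR, hball⟩ := Metric.eventually_nhds_iff_ball.1 (hf.and hs)
  refine ⟨R / 2, half_pos hR, Metric.tendstoUniformlyOn_iff.2 fun ε hε => ?_⟩
  have hcont : Continuous fun t : ℂ => ‖t • v‖ := by fun_prop
  have hcont' : Continuous fun t : ℂ => K * (‖t‖ * ‖v‖ ^ 2) := by fun_prop
  have hsmall : ∀ᶠ t : ℂ in 𝓝[≠] 0, ‖t • v‖ < R / 2 ∧ K * (‖t‖ * ‖v‖ ^ 2) < ε :=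
    nhdsWithin_le_nhds <| ((hcont.tendsto 0).eventually_lt_const (by simpa using half_pos hR)).and
      ((hcont'.tendsto 0).eventually_lt_const (by simpa using hε))
  filter_upwards [hsmall, self_mem_nhdsWithin] with t ⟨htR, htε⟩ ht0 x hx
  have ht : 0 < ‖t‖ := norm_pos_iff.2 ht0
  have hquot : t⁻¹ • (f (x + t • v) - f x) - fderiv ℂ f x v =
      t⁻¹ • (f (x + t • v) - f x - fderiv ℂ f x (t • v)) := by
    rw [map_smul, smul_sub t⁻¹ _ (t • _), inv_smul_smul₀ ht0]
  rw [dist_comm, dist_eq_norm, hquot, norm_smul, norm_inv]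
  refine lt_of_le_of_lt ?_ htε
  rw [inv_mul_le_iff₀ ht]
  refine (norm_sub_sub_fderiv_le (fun y hy => (hball y hy).1)
    (hlip.mono fun y hy => (hball y hy).2) (by linarith [mem_ball.1 hx])).trans_eq ?_
  rw [norm_smul]
  ring

theorem differentiableAt_fderiv_apply [CompleteSpace F]
    (hf : ∀ᶠ x in 𝓝 q, DifferentiableAt ℂ f x) (v : E) :
    DifferentiableAt ℂ (fun x => fderiv ℂ f x v) q := by
  obtain ⟨R, hR, hslope⟩ := exists_tendstoUniformlyOn_slope hf v
  obtain ⟨r, hr, hball⟩ := Metric.eventually_nhds_iff_ball.1 hf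
  have hmin : 0 < min R (r / 2) := lt_min hR (half_pos hr)
  refine differentiableAt_of_tendstoUniformlyOn_ball hmin
    (hslope.mono (ball_subset_ball (min_le_left _ _))) ?_
  have hcont : Continuous fun t : ℂ => ‖t • v‖ := by fun_prop
  have hsmall : ∀ᶠ t : ℂ in 𝓝 0, ‖t • v‖ < r / 2 :=
    (hcont.tendsto 0).eventually_lt_const (by simpa using half_pos hr)
  filter_upwards [nhdsWithin_le_nhds hsmall] with t ht x hx
  have hx : dist x q < r / 2 := (mem_ball.1 hx).trans_le (min_le_right _ _)
  have hshift : x + t • v ∈ ball q r := by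
    rw [mem_ball]
    linarith [dist_triangle (x + t • v) x q, dist_self_add_left (t • v) x]
  exact ((((differentiableAt_comp_add_right _).2 (hball _ hshift)).sub
    (hball x (by rw [mem_ball]; linarith))).const_smul _).differentiableWithinAt

end Cauchy

section UnitField

variable {E : Type*} [NormedAddCommGroup E] [NormedSpace ℂ E] {f : E → ℂ} {v p q : E}

/-- The vector field in the constant direction `v` that is normalized by `df = 1`, so that `f` is,
up to translation, the time parameter of its flow. It takes the junk value `0` where `df v = 0`. -/
noncomputable def unitField (f : E → ℂ) (v q : E) : E :=
  (fderiv ℂ f q v)⁻¹ • v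

theorem fderiv_unitField (hv : fderiv ℂ f q v ≠ 0) : fderiv ℂ f q (unitField f v q) = 1 := by
  rw [unitField, map_smul, smul_eq_mul, inv_mul_cancel₀ hv]

theorem unitField_ne_zero (hv : fderiv ℂ f q v ≠ 0) : unitField f v q ≠ 0 := by
  intro h
  simpa [h] using fderiv_unitField hv

theorem differentiableAt_unitField (hf : ∀ᶠ x in 𝓝 q, DifferentiableAt ℂ f x)
    (hv : fderiv ℂ f q v ≠ 0) : DifferentiableAt ℂ (unitField f v) q :=
  ((differentiableAt_fderiv_apply hf v).fun_inv hv).smul_const v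

theorem eventually_fderiv_apply_ne_zero (hf : ∀ᶠ x in 𝓝 p, DifferentiableAt ℂ f x)
    (hv : fderiv ℂ f p v ≠ 0) : ∀ᶠ q in 𝓝 p, fderiv ℂ f q v ≠ 0 :=
  (differentiableAt_fderiv_apply hf v).continuousAt.eventually_ne hv

end UnitField

section Leaves

variable {E : Type*} [NormedAddCommGroup E] [NormedSpace ℂ E] {p v : E} {X : E → E} {f : E → ℂ}
  {α : Type*} {l : Filter α} {z : ℂ} {Z : α → ℂ → E} {P : α → ℝ}

theorem eventually_analyticAt_comp (hf : ∀ᶠ q in 𝓝 p, DifferentiableAt ℂ f q)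
    (hZp : Tendsto (fun a => Z a z) l (𝓝 p))
    (hZ : ∀ᶠ a in l, ∀ᶠ T in 𝓝 z, DifferentiableAt ℂ (Z a) T) :
    ∀ᶠ a in l, AnalyticAt ℂ (fun T => f (Z a T)) z := by
  filter_upwards [hZp.eventually hf.eventually_nhds, hZ] with a hfa hZa
  refine analyticAt_iff_eventually_differentiableAt.2 ?_
  filter_upwards [hZa, hZa.self_of_nhds.continuousAt.eventually hfa] with T hZT hfT
    using hfT.comp T hZT

theorem eventually_deriv_comp (hf : ∀ᶠ q in 𝓝 p, DifferentiableAt ℂ f q)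
    (hZp : Tendsto (fun a => Z a z) l (𝓝 p))
    (hZ : ∀ᶠ a in l, HasDerivAt (Z a) (X (Z a z)) z) :
    ∀ᶠ a in l, deriv (fun T => f (Z a T)) z = fderiv ℂ f (Z a z) (X (Z a z)) := by
  filter_upwards [hZp.eventually hf, hZ] with a hfa hZa
    using (hfa.hasFDerivAt.comp_hasDerivAt z hZa).deriv

theorem isTame_norm_sq_comp (hX : ContinuousAt X p) (hf : ∀ᶠ q in 𝓝 p, DifferentiableAt ℂ f q)
    (hP : Tendsto P l (𝓝 0)) (hZp : Tendsto (fun a => Z a z) l (𝓝 p))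
    (hZ : ∀ᶠ a in l, ∀ᶠ T in 𝓝 z, HasDerivAt (Z a) (X (Z a T)) T) :
    IsTame l P z fun a T => ‖f (Z a T)‖ ^ 2 := by
  have hdiff : ∀ᶠ a in l, ∀ᶠ T in 𝓝 z, DifferentiableAt ℂ (Z a) T :=
    hZ.mono fun _ ha => ha.mono fun _ hT => hT.differentiableAt
  have hderiv := eventually_deriv_comp hf hZp (hZ.mono fun _ ha => ha.self_of_nhds)
  have hlim : Tendsto (fun q => fderiv ℂ f q (X q)) (𝓝 p) (𝓝 (fderiv ℂ f p (X p))) :=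
    (continuousAt_fderiv hf).clm_apply hX
  exact isTame_norm_sq hP (eventually_analyticAt_comp hf hZp hdiff)
    ((hf.self_of_nhds.continuousAt.tendsto.comp hZp).isBigO_one ℝ)
    (((hlim.comp hZp).isBigO_one ℝ).congr' (hderiv.mono fun _ ha => ha.symm) .rfl)

theorem isTame_norm_sq_unitField (hf : ∀ᶠ q in 𝓝 p, DifferentiableAt ℂ f q)
    (hv : fderiv ℂ f p v ≠ 0) (hP : Tendsto P l (𝓝 0))
    (hZp : Tendsto (fun a => Z a z) l (𝓝 p))
    (hZ : ∀ᶠ a in l, ∀ᶠ T in 𝓝 z, HasDerivAt (Z a) (unitField f v (Z a T)) T) :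
    IsTame l P z fun a T => ‖unitField f v (Z a T)‖ ^ 2 := by
  have hinv : ∀ᶠ q in 𝓝 p, DifferentiableAt ℂ (fun x => (fderiv ℂ f x v)⁻¹) q := by
    filter_upwards [hf.eventually_nhds, eventually_fderiv_apply_ne_zero hf hv] with q hfq hvq
      using (differentiableAt_fderiv_apply hfq v).fun_inv hvq
  have hX := (differentiableAt_unitField hf hv).continuousAt
  have := (isTame_norm_sq_comp hX hinv hP hZp hZ).mul hP (isTame_const (‖v‖ ^ 2))
  simpa only [unitField, norm_smul, mul_pow] using this

theorem tendsto_gaussCurv_leaf (hf : ∀ᶠ q in 𝓝 p, DifferentiableAt ℂ f q) (hfp : f p = 0)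
    (hv : fderiv ℂ f p v ≠ 0) (hZp : Tendsto (fun a => Z a z) l (𝓝 p))
    (hfZ : ∀ᶠ a in l, f (Z a z) ≠ 0)
    (hZ : ∀ᶠ a in l, ∀ᶠ T in 𝓝 z, HasDerivAt (Z a) (unitField f v (Z a T)) T) :
    Tendsto (fun a => gaussCurv (fun T =>
        (1 + ‖f (Z a T)‖ ^ 2 * u (‖f (Z a T)‖ ^ 2) ^ 2) *
          ‖fderiv ℂ f (Z a T) (unitField f v (Z a T))‖ ^ 2 + ‖unitField f v (Z a T)‖ ^ 2) z)
      l (𝓝 (-4)) := by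
  have hdiff : ∀ᶠ a in l, ∀ᶠ T in 𝓝 z, DifferentiableAt ℂ (Z a) T :=
    hZ.mono fun _ ha => ha.mono fun _ hT => hT.differentiableAt
  have hv' := eventually_fderiv_apply_ne_zero hf hv
  have hlim : Tendsto (fun a => f (Z a z)) l (𝓝 0) :=
    hfp ▸ hf.self_of_nhds.continuousAt.tendsto.comp hZp
  have hderiv : ∀ᶠ a in l, deriv (fun T => f (Z a T)) z = 1 := by
    filter_upwards [eventually_deriv_comp hf hZp (hZ.mono fun _ ha => ha.self_of_nhds),
      hZp.eventually hv'] with a ha hva using ha.trans (fderiv_unitField hva)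
  refine (tendsto_gaussCurv_neg_four (eventually_analyticAt_comp hf hZp hdiff)
    (tendsto_nhdsWithin_iff.2 ⟨hlim, hfZ⟩) hderiv (isTame_norm_sq_unitField hf hv
      (tendsto_cuspWeight_zero.comp hlim) hZp hZ)).congr' ?_
  filter_upwards [hdiff, hZp.eventually hv'.eventually_nhds] with a hZa hva
  refine gaussCurv_congr ?_
  filter_upwards [hZa.self_of_nhds.continuousAt.eventually hva] with T hT
  rw [fderiv_unitField hT, norm_one, one_pow, mul_one]

theorem eventually_forall_leaf_norm_gaussCurv_lt (hf : ∀ᶠ q in 𝓝 p, DifferentiableAt ℂ f q)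
    (hfp : f p = 0) (hv : fderiv ℂ f p v ≠ 0) {δ : ℝ} (hδ : 0 < δ) :
    ∀ᶠ q in 𝓝 p, f q ≠ 0 → ∀ Z : ℂ → E, Z 0 = q →
      (∀ᶠ T in 𝓝 0, HasDerivAt Z (unitField f v (Z T)) T) →
      ‖gaussCurv (fun T =>
        (1 + ‖f (Z T)‖ ^ 2 * u (‖f (Z T)‖ ^ 2) ^ 2) *
          ‖fderiv ℂ f (Z T) (unitField f v (Z T))‖ ^ 2 + ‖unitField f v (Z T)‖ ^ 2) 0 - (-4)‖ <
        δ := by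
  let leaves : Set (ℂ → E) :=
    {Z | f (Z 0) ≠ 0 ∧ ∀ᶠ T in 𝓝 0, HasDerivAt Z (unitField f v (Z T)) T}
  have hleaves : ∀ᶠ Z in comap (fun Z : ℂ → E => Z 0) (𝓝 p) ⊓ 𝓟 leaves, Z ∈ leaves :=
    mem_inf_of_right (mem_principal_self _)
  have hlim := tendsto_gaussCurv_leaf hf hfp hv (tendsto_comap.mono_left inf_le_left)
    (hleaves.mono fun _ h => h.1) (hleaves.mono fun _ h => h.2)
  have hlt := hlim.eventually (ball_mem_nhds _ hδ)
  rw [eventually_inf_principal, eventually_comap] at hlt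
  filter_upwards [hlt] with q hq hfq Z hZq hZ
  exact mem_ball_iff_norm.1 (hq Z hZq ⟨hZq ▸ hfq, hZ⟩)

end Leaves

theorem stmt5_general {E : Type*} [NormedAddCommGroup E] [NormedSpace ℂ E] {f : E → ℂ} {p v : E}
    (hf : ∀ᶠ q in 𝓝 p, DifferentiableAt ℂ f q) (hfp : f p = 0) (hv : fderiv ℂ f p v ≠ 0) :
    ∃ V : Set E, IsOpen V ∧ p ∈ V ∧
    ∃ X : E → E, DifferentiableOn ℂ X V ∧ (∀ q ∈ V, X q ≠ 0) ∧
      ∀ δ : ℝ, 0 < δ →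
        ∃ V' : Set E, V' ⊆ V ∧ IsOpen V' ∧ p ∈ V' ∧
          ∀ q ∈ V', f q ≠ 0 →
          ∀ ε : ℝ, 0 < ε →
          ∀ Z : ℂ → E,
            DifferentiableOn ℂ Z (ball 0 ε) →
            Z 0 = q →
            (∀ T ∈ ball (0 : ℂ) ε, Z T ∈ V) →
            (∀ T ∈ ball (0 : ℂ) ε, deriv Z T = X (Z T)) →
            (∀ T ∈ ball (0 : ℂ) ε, f (Z T) ≠ 0) →
            ‖gaussCurv (fun T =>
              (1 + ‖f (Z T)‖ ^ 2 * u (‖f (Z T)‖ ^ 2) ^ 2) *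
                ‖fderiv ℂ f (Z T) (X (Z T))‖ ^ 2 + ‖X (Z T)‖ ^ 2) 0 - (-4)‖ < δ := by
  obtain ⟨V, hV, hVo, hpV⟩ := _root_.eventually_nhds_iff.1
    (hf.eventually_nhds.and (eventually_fderiv_apply_ne_zero hf hv))
  refine ⟨V, hVo, hpV, unitField f v,
    fun q hq => (differentiableAt_unitField (hV q hq).1 (hV q hq).2).differentiableWithinAt,
    fun q hq => unitField_ne_zero (hV q hq).2, fun δ hδ => ?_⟩
  obtain ⟨U, hU, hUo, hpU⟩ := _root_.eventually_nhds_iff.1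
    (eventually_forall_leaf_norm_gaussCurv_lt hf hfp hv hδ)
  refine ⟨V ∩ U, Set.inter_subset_left, hVo.inter hUo, ⟨hpV, hpU⟩,
    fun q hq hfq ε hε Z hZ hZq _ hZX _ => hU q hq.2 hfq Z hZq ?_⟩
  filter_upwards [ball_mem_nhds 0 hε] with T hT
  rw [← hZX T hT]
  exact (hZ.differentiableAt (isOpen_ball.mem_nhds hT)).hasDerivAt

/-- if `f(p) = 0` and `∂f/∂z₁(p) ≠ 0`, there is a nowhere-vanishing
holomorphic vector field `X` on a neighbourhood `V` of `p` such that the leafwise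
Gaussian curvature at the base point tends to `−4` as the base point tends to `p`. -/
theorem stmt5 (n : ℕ) (hn : 2 ≤ n)
    (f : EuclideanSpace ℂ (Fin n) → ℂ) (hf : Differentiable ℂ f)
    (p : EuclideanSpace ℂ (Fin n)) (hfp : f p = 0)
    (hdf1 : fderiv ℂ f p (EuclideanSpace.single (⟨0, by omega⟩ : Fin n) 1) ≠ 0) :
    ∃ (V : Set (EuclideanSpace ℂ (Fin n))), IsOpen V ∧ p ∈ V ∧
    ∃ (X : EuclideanSpace ℂ (Fin n) → EuclideanSpace ℂ (Fin n)),
      DifferentiableOn ℂ X V ∧ (∀ q ∈ V, X q ≠ 0) ∧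
      ∀ δ : ℝ, 0 < δ →
        ∃ (V' : Set (EuclideanSpace ℂ (Fin n))), V' ⊆ V ∧ IsOpen V' ∧ p ∈ V' ∧
          ∀ q ∈ V', f q ≠ 0 →
          ∀ (ε : ℝ), 0 < ε →
          ∀ (Z : ℂ → EuclideanSpace ℂ (Fin n)),
            DifferentiableOn ℂ Z (Metric.ball 0 ε) →
            Z 0 = q →
            (∀ T ∈ Metric.ball (0 : ℂ) ε, Z T ∈ V) →
            (∀ T ∈ Metric.ball (0 : ℂ) ε, deriv Z T = X (Z T)) →
            (∀ T ∈ Metric.ball (0 : ℂ) ε, f (Z T) ≠ 0) →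
            ‖gaussCurv (fun T =>
              (1 + ‖f (Z T)‖ ^ 2 * u (‖f (Z T)‖ ^ 2) ^ 2) *
                ‖fderiv ℂ f (Z T) (X (Z T))‖ ^ 2 + ‖X (Z T)‖ ^ 2) 0 - (-4)‖ < δ :=
  stmt5_general (.of_forall hf) hfp hdf1
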